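/- With the setup of Theorem 2, let Λ be a set of quadruples ζ = (s_1, s_2, t_1, t_2) with t_1 ≠ t_2 such that for any two distinct ζ_1, ζ_2 ∈ Λ the four group indices t_1^1, t_2^1, t_1^2, t_2^2 are pairwise distinct. For ζ ∈ Λ, let X^{γ,ζ} be the arrays of Theorem 2 built from ζ. Then {X^ζ = {X^{γ,ζ} : γ} : ζ ∈ Λ} is a 2-D ZCACS: for ζ_1 ≠ ζ_2 in Λ, Σ_{γ ∈ ∏_α Z_{p_α}} C(X^{γ,ζ_1}, X^{γ,ζ_2})(τ_1, τ_2) = 0 for all |τ_1| < 2^m and |τ_2| < ∏_α p_α^{m_α−1}, while each X^ζ individually is a 2-D ZCAC with peak value 2^{m+1}∏_α p_α^{m_α+1} at (0,0). -/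

import Mathlib

/-!
The columns of an array split into `2 ∏ p_α` blocks of length `M = ∏ p_α ^ (m_α - 1)`. Along a block,
the phase is `R_t^γ` up to a constant independent of `γ`, with `t = t_1` in the first half of the
blocks and `t = t_2` in the second (`FFun_block`). Everything rests on the fact that the sequences
`ω ^ R_t^γ` form a complete complementary code (`ccc`): summed over `γ`, the correlation of the
groups `t` and `t'` vanishes unless `t = t'` and the shift is `0`. The aggregate correlation of two
array families is therefore a sum over pairs of blocks that are exactly aligned and carry the same
group index (`sum_accf2`).

For two quadruples with pairwise distinct group indices no such pair exists. For a single quadruple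
and a column shift shorter than `M`, aligned blocks must coincide and the column shift is `0`; what
remains is a multiple of the sum of the autocorrelations of `ω ^ a` and `ω ^ b`, which form a Golay
pair (`golay`). The latter is `ccc` again, for the single prime `2`.

For `ccc`, indices are replaced by their digit vectors, read in the order given by `π`, and a pair
of indices at distance `τ` becomes `(u, u + d)` (`abstract_ccc`). If some block of `d` begins with a
nonzero digit, the sum over `γ` vanishes. If every block of `d` begins with `0` but `d ≠ 0`, some
block has a first nonzero digit with a predecessor; incrementing that predecessor simultaneously in
`u` and `u + d` keeps the distance and multiplies the term by a root of unity other than `1`, which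
depends on `d` only, so the sum over `u` vanishes. For `d = 0` the sum over the last digits of `u`
decides between `t = t'` and `t ≠ t'`.
-/

open Finset

/-- Aperiodic cross-correlation function (ACCF) of two length-`L` complex sequences. -/
noncomputable def accf (L : ℕ) (a b : ℕ → ℂ) (τ : ℤ) : ℂ :=
  if 0 ≤ τ ∧ τ < (L : ℤ) then
    ∑ i ∈ range (L - τ.toNat), a i * (starRingEnd ℂ) (b (i + τ.toNat))
  else if -(L : ℤ) < τ ∧ τ ≤ -1 then
    ∑ i ∈ range (L - (-τ).toNat), a (i + (-τ).toNat) * (starRingEnd ℂ) (b i)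
  else 0

/-- The `β`-th base-`p α` digit of the `α`-th mixed-radix block of `j`, where the
`α`-th block has size `p α ^ (m α - 1)` and earlier blocks vary faster. This realizes
the lexicographic enumeration of `∏_α Z_{p_α}^{m_α-1}`: `dig p m j α β = v_{p_α,β+1}`. -/
def dig {k : ℕ} (p m : Fin k → ℕ) (j : ℕ) (α : Fin k) (β : ℕ) : ℕ :=
  (j / ∏ α' ∈ Finset.univ.filter (fun α' => α' < α), p α' ^ (m α' - 1)) %
      (p α ^ (m α - 1)) / p α ^ β % p α

/-- The `α`-th coordinate of `j` in the mixed-radix enumeration of `∏_α Z_{p_α}`. -/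
def odig {k : ℕ} (p : Fin k → ℕ) (j : ℕ) (α : Fin k) : ℕ :=
  (j / ∏ α' ∈ Finset.univ.filter (fun α' => α' < α), p α') % p α

/-- The multivariable function `f = f_1 + ⋯ + f_k`, where
`f_α = (λ/p_α)·Σ_β v_{π_α(β)} v_{π_α(β+1)} + Σ_β c_{α,β} v_β + c_α`
(indices `0`-based, `π α` a bijection of `{0,…,m_α-2}`). -/
def fFun {k : ℕ} (p m : Fin k → ℕ) (lam : ℕ) (π : Fin k → ℕ → ℕ)
    (c : Fin k → ℕ → ZMod lam) (c' : Fin k → ZMod lam) (j : ℕ) : ZMod lam :=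
  ∑ α, (((lam / p α : ℕ) : ZMod lam) *
        ∑ β ∈ range (m α - 2),
          (dig p m j α (π α β) : ZMod lam) * (dig p m j α (π α (β + 1)) : ZMod lam)
      + ∑ β ∈ range (m α - 1), c α β * (dig p m j α β : ZMod lam) + c' α)

/-- The function `R_t^γ = f + Σ_α (λ/p_α) v_{π_α(1)} γ_α + Σ_α (λ/p_α) v_{π_α(m_α-1)} t_α`. -/
def RFun {k : ℕ} (p m : Fin k → ℕ) (lam : ℕ) (π : Fin k → ℕ → ℕ)
    (c : Fin k → ℕ → ZMod lam) (c' : Fin k → ZMod lam)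
    (γ t : ∀ α, Fin (p α)) (j : ℕ) : ZMod lam :=
  fFun p m lam π c c' j
    + ∑ α, ((lam / p α : ℕ) : ZMod lam) * (dig p m j α (π α 0) : ZMod lam) * ((γ α : ℕ) : ZMod lam)
    + ∑ α, ((lam / p α : ℕ) : ZMod lam) * (dig p m j α (π α (m α - 2)) : ZMod lam) *
        ((t α : ℕ) : ZMod lam)

/-- The function `a_{s,t}^γ = R_t^γ + T_s` on `∏_α Z_{p_α}^{m_α-1} × ∏_α Z_{p_α}`,
with the `∏_α Z_{p_α}` coordinates varying slowest (outer index). -/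
def aFun {k : ℕ} (p m : Fin k → ℕ) (lam : ℕ) (π : Fin k → ℕ → ℕ)
    (c : Fin k → ℕ → ZMod lam) (c' : Fin k → ZMod lam)
    (s t γ : ∀ α, Fin (p α)) (j : ℕ) : ZMod lam :=
  RFun p m lam π c c' γ t (j % ∏ α, p α ^ (m α - 1))
    + ∑ α, ((lam / p α : ℕ) : ZMod lam) *
        (odig p (j / ∏ α', p α' ^ (m α' - 1)) α : ZMod lam) * ((s α : ℕ) : ZMod lam)

/-- The complex sequence `ψ(g) = ω_λ^{g(·)}` associated to a `ZMod λ`-valued function. -/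
noncomputable def seqC (lam : ℕ) (g : ℕ → ZMod lam) : ℕ → ℂ :=
  fun j => Complex.exp (2 * Real.pi * Complex.I * ((g j).val : ℂ) / (lam : ℂ))

/-- 2-D aperiodic cross-correlation of `L1 × L2` complex arrays at shift `(τ1, τ2)`. -/
noncomputable def accf2 (L1 L2 : ℕ) (X Y : ℕ → ℕ → ℂ) (τ1 τ2 : ℤ) : ℂ :=
  if 0 ≤ τ1 then
    if 0 ≤ τ2 then
      ∑ i ∈ range (L1 - τ1.toNat), ∑ j ∈ range (L2 - τ2.toNat),
        X i j * (starRingEnd ℂ) (Y (i + τ1.toNat) (j + τ2.toNat))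
    else
      ∑ i ∈ range (L1 - τ1.toNat), ∑ j ∈ range (L2 - (-τ2).toNat),
        X i (j + (-τ2).toNat) * (starRingEnd ℂ) (Y (i + τ1.toNat) j)
  else
    if 0 ≤ τ2 then
      ∑ i ∈ range (L1 - (-τ1).toNat), ∑ j ∈ range (L2 - τ2.toNat),
        X (i + (-τ1).toNat) j * (starRingEnd ℂ) (Y i (j + τ2.toNat))
    else
      ∑ i ∈ range (L1 - (-τ1).toNat), ∑ j ∈ range (L2 - (-τ2).toNat),
        X (i + (-τ1).toNat) (j + (-τ2).toNat) * (starRingEnd ℂ) (Y i j)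

/-- The `γ`-th binary digit of `i`. -/
def bit (i γ : ℕ) : ℕ := i / 2 ^ γ % 2

/-- The Boolean-function part `a(x) = (λ/2)Σ x_{π(β)}x_{π(β+1)} + Σ g_β x_β + e`
evaluated on the binary digits of `i`. -/
def aBool (lam mB : ℕ) (πB : ℕ → ℕ) (g : ℕ → ZMod lam) (e : ZMod lam) (i : ℕ) : ZMod lam :=
  ((lam / 2 : ℕ) : ZMod lam) *
      ∑ β ∈ range (mB - 1), (bit i (πB β) : ZMod lam) * (bit i (πB (β + 1)) : ZMod lam)
    + ∑ β ∈ range mB, g β * (bit i β : ZMod lam) + e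

/-- The Golay mate `b(x) = a(x) + (λ/2)x_{π(1)} + (e' − e)`. -/
def bBool (lam mB : ℕ) (πB : ℕ → ℕ) (g : ℕ → ZMod lam) (e' : ZMod lam) (i : ℕ) : ZMod lam :=
  aBool lam mB πB g e' i + ((lam / 2 : ℕ) : ZMod lam) * (bit i (πB 0) : ZMod lam)

/-- The function `F_d^{γ,s1,s2,t1,t2} = (1−v'')(a_{s1,t1}^γ + a(d)) + v''(a_{s2,t2}^γ + b(d))`,
giving the `(i,j)` entry of the `ZMod λ`-valued array (row `i ↔ d`, column
`j < 2∏_α p_α^{m_α}` with the `Z_2` coordinate `v'' = j / ∏_α p_α^{m_α}` outermost). -/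
def FFun {k : ℕ} (p m : Fin k → ℕ) (lam : ℕ) (π : Fin k → ℕ → ℕ)
    (c : Fin k → ℕ → ZMod lam) (c' : Fin k → ZMod lam)
    (mB : ℕ) (πB : ℕ → ℕ) (g : ℕ → ZMod lam) (e e' : ZMod lam)
    (s1 s2 t1 t2 γ : ∀ α, Fin (p α)) (i j : ℕ) : ZMod lam :=
  (1 - ((j / ∏ α, p α ^ (m α) : ℕ) : ZMod lam)) *
      (aFun p m lam π c c' s1 t1 γ (j % ∏ α, p α ^ (m α)) + aBool lam mB πB g e i)
    + ((j / ∏ α, p α ^ (m α) : ℕ) : ZMod lam) *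
      (aFun p m lam π c c' s2 t2 γ (j % ∏ α, p α ^ (m α)) + bBool lam mB πB g e' i)

/-- The complex array `X^γ = Ψ(K^γ)` of size `2^{mB} × 2∏_α p_α^{m_α}`. -/
noncomputable def XArr {k : ℕ} (p m : Fin k → ℕ) (lam : ℕ) (π : Fin k → ℕ → ℕ)
    (c : Fin k → ℕ → ZMod lam) (c' : Fin k → ZMod lam)
    (mB : ℕ) (πB : ℕ → ℕ) (g : ℕ → ZMod lam) (e e' : ZMod lam)
    (s1 s2 t1 t2 γ : ∀ α, Fin (p α)) : ℕ → ℕ → ℂ :=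
  fun i j => Complex.exp (2 * Real.pi * Complex.I *
    (((FFun p m lam π c c' mB πB g e e' s1 s2 t1 t2 γ i j).val : ℕ) : ℂ) / (lam : ℂ))


/-! ### Complementary codes on digit vectors -/

/-- Digit vectors: block `a` consists of `n a + 1` digits, each a residue modulo `p a`. -/
abbrev Digits {ι : Type*} (p n : ι → ℕ) : Type _ := ∀ a, Fin (n a + 1) → ZMod (p a)

/-- If a translation multiplies the summand by a constant `z ≠ 1`, the sum vanishes. -/
theorem sum_eq_zero_of_shift {G : Type*} [AddGroup G] [Fintype G] (F : G → ℂ) (e : G) (z : ℂ)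
    (hz : z ≠ 1) (h : ∀ u, F (u + e) = z * F u) : ∑ u, F u = 0 := by
  have h1 : ∑ u, F (u + e) = ∑ u, F u := Equiv.sum_comp (Equiv.addRight e) F
  simp only [h, ← mul_sum] at h1
  have h2 : (z - 1) * ∑ u, F u = 0 := by rw [sub_mul, h1]; ring
  exact (mul_eq_zero.mp h2).resolve_left (sub_ne_zero.mpr hz)

section abstract_code
variable {ι : Type*} [Fintype ι] [DecidableEq ι] {p n : ι → ℕ} [∀ a, Fact (p a).Prime]
  {lam : ℕ}

/-- The phase of a complementary-code sequence at the digit vector `u`, without its constant term: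
in each block a path quadratic form, `γ` coupled to the first digit, `t` to the last, and linear
terms in the digits. The homomorphisms `H a` stand for multiplication by `λ / p a`. -/
def phaseSum (H : ∀ a, ZMod (p a) →+ ZMod lam) (c : ∀ a, Fin (n a + 1) → ZMod lam)
    (γ t : ∀ a, ZMod (p a)) (u : Digits p n) : ZMod lam :=
  ∑ a, (H a (∑ β : Fin (n a), u a β.castSucc * u a β.succ + u a 0 * γ a
      + u a (Fin.last _) * t a) + ∑ β, c a β * ((u a β).val : ZMod lam))

theorem phaseSum_add_gamma (H : ∀ a, ZMod (p a) →+ ZMod lam) (c : ∀ a, Fin (n a + 1) → ZMod lam)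
    (γ δ t : ∀ a, ZMod (p a)) (u : Digits p n) :
    phaseSum H c (γ + δ) t u = phaseSum H c γ t u + ∑ a, H a (u a 0 * δ a) := by
  unfold phaseSum
  rw [← sum_add_distrib]
  refine sum_congr rfl fun a _ => ?_
  simp only [Pi.add_apply, mul_add, map_add]
  ring

/-- Let `d` vanish up to position `b`. Incrementing position `b` in both `u` and `u + d` changes the
difference of the path forms exactly by the next entry of `d`. -/
theorem path_shift {R : Type*} [CommRing R] {N : ℕ} (u d : Fin (N + 1) → R) (b : Fin N)
    (hd : ∀ i : Fin (N + 1), i ≤ b.castSucc → d i = 0) :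
    (∑ β : Fin N, (u + Pi.single b.castSucc 1 : Fin (N + 1) → R) β.castSucc *
        (u + Pi.single b.castSucc 1 : Fin (N + 1) → R) β.succ)
      - ∑ β : Fin N, (u + d + Pi.single b.castSucc 1 : Fin (N + 1) → R) β.castSucc *
          (u + d + Pi.single b.castSucc 1 : Fin (N + 1) → R) β.succ
    = (∑ β : Fin N, u β.castSucc * u β.succ)
      - (∑ β : Fin N, (u + d) β.castSucc * (u + d) β.succ) - d b.succ := by
  have h : d b.succ = ∑ β : Fin N, (Pi.single b.castSucc 1 : Fin (N + 1) → R) β.castSucc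
      * d β.succ := by
    rw [sum_eq_single b]
    · simp
    · intro β _ hβ
      rw [Pi.single_eq_of_ne (by simpa using hβ), zero_mul]
    · simp
  rw [h, ← sum_sub_distrib, ← sum_sub_distrib, ← sum_sub_distrib]
  refine sum_congr rfl fun β _ => ?_
  have h2 : d β.castSucc * (Pi.single b.castSucc 1 : Fin (N + 1) → R) β.succ = 0 := by
    by_cases hβ : β.succ = b.castSucc
    · rw [hd β.castSucc, zero_mul]
      rw [← hβ]; exact Fin.castSucc_lt_succ.le
    · rw [Pi.single_eq_of_ne hβ, mul_zero]
  simp only [Pi.add_apply]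
  linear_combination -h2

/-- The digit vector whose only nonzero digit is a `1` at position `b₀` of block `a₀`. -/
def unitVec (a₀ : ι) (b₀ : Fin (n a₀ + 1)) : Digits p n :=
  Pi.single a₀ (Pi.single b₀ 1)

theorem unitVec_same (a₀ : ι) (b₀ : Fin (n a₀ + 1)) :
    (unitVec a₀ b₀ : Digits p n) a₀ = Pi.single b₀ 1 :=
  Pi.single_eq_same _ _

theorem unitVec_of_ne {a₀ a : ι} (b₀ : Fin (n a₀ + 1)) (h : a ≠ a₀) :
    (unitVec a₀ b₀ : Digits p n) a = 0 :=
  Pi.single_eq_of_ne h _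

/-- Incrementing a digit in which `u` and `u + d` agree preserves all differences of the digits,
taken as integers: a wrap-around to `0` happens in both vectors at once. -/
theorem val_shift (u d : Digits p n) (a₀ : ι) (b₀ : Fin (n a₀ + 1))
    (hd : d a₀ b₀ = 0) (a : ι) (b : Fin (n a + 1)) :
    (((u + d + unitVec a₀ b₀ : Digits p n) a b).val : ℤ)
      - ((u + unitVec a₀ b₀ : Digits p n) a b).val
    = (((u + d) a b).val : ℤ) - (u a b).val := by
  by_cases ha : a = a₀
  · subst ha
    by_cases hb : b = b₀
    · subst hb
      simp only [Pi.add_apply, hd, add_zero, sub_self]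
    · simp only [Pi.add_apply, unitVec_same, Pi.single_eq_of_ne hb, add_zero]
  · simp only [Pi.add_apply, unitVec_of_ne b₀ ha, Pi.zero_apply, add_zero]

theorem val_shift' (u d : Digits p n) (a₀ : ι) (b₀ : Fin (n a₀ + 1))
    (hd : d a₀ b₀ = 0) (a : ι) (b : Fin (n a + 1)) :
    (((u + unitVec a₀ b₀ : Digits p n) a b).val : ZMod lam)
      - (((u + d + unitVec a₀ b₀ : Digits p n) a b).val : ZMod lam)
    = ((u a b).val : ZMod lam) - (((u + d) a b).val : ZMod lam) := by
  have := congrArg (Int.cast : ℤ → ZMod lam) (val_shift u d a₀ b₀ hd a b)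
  push_cast at this
  linear_combination -this

/-- If block `a₀` of `d` vanishes up to `b₀`, incrementing digit `b₀` in both arguments multiplies
the correlation term by a character of the next digit of `d`. -/
theorem phaseSum_shift (H : ∀ a, ZMod (p a) →+ ZMod lam) (c : ∀ a, Fin (n a + 1) → ZMod lam)
    (γ t t' : ∀ a, ZMod (p a)) (u d : Digits p n) (a₀ : ι)
    (b₀ : Fin (n a₀)) (hd : ∀ i : Fin (n a₀ + 1), i ≤ b₀.castSucc → d a₀ i = 0) :
    phaseSum H c γ t (u + unitVec a₀ b₀.castSucc)
      - phaseSum H c γ t' (u + d + unitVec a₀ b₀.castSucc)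
    = phaseSum H c γ t u - phaseSum H c γ t' (u + d) - H a₀ (d a₀ b₀.succ) := by
  have h : H a₀ (d a₀ b₀.succ) = ∑ a, (Pi.single a₀ (H a₀ (d a₀ b₀.succ)) : ι → ZMod lam) a := by
    simp
  rw [h]
  unfold phaseSum
  rw [← sum_sub_distrib, ← sum_sub_distrib, ← sum_sub_distrib]
  refine sum_congr rfl fun a _ => ?_
  have hc : ∑ β, c a β * (((u + unitVec a₀ b₀.castSucc : Digits p n) a β).val : ZMod lam)
      - ∑ β, c a β * (((u + d + unitVec a₀ b₀.castSucc : Digits p n) a β).val : ZMod lam)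
      = ∑ β, c a β * ((u a β).val : ZMod lam) - ∑ β, c a β * (((u + d) a β).val : ZMod lam) := by
    rw [← sum_sub_distrib, ← sum_sub_distrib]
    refine sum_congr rfl fun β _ => ?_
    rw [← mul_sub, ← mul_sub, val_shift' u d a₀ _ (hd _ le_rfl)]
  have key : ∀ x y z w x' y' z' w' v : ZMod lam, y - w = y' - w' → x - z = x' - z' - v →
      x + y - (z + w) = x' + y' - (z' + w') - v := by
    intro x y z w x' y' z' w' v h₁ h₂
    linear_combination h₁ + h₂
  refine key _ _ _ _ _ _ _ _ _ hc ?_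
  by_cases ha : a = a₀
  · subst ha
    rw [Pi.single_eq_same, ← map_sub, ← map_sub, ← map_sub]
    simp only [Pi.add_apply, unitVec_same]
    congr 1
    have := path_shift (u a) (d a) b₀ hd
    have e0 : b₀.castSucc ≠ Fin.last _ := (Fin.castSucc_lt_last _).ne
    have hd0 : d a 0 = 0 := hd 0 (Fin.zero_le _)
    simp only [Pi.add_apply] at this ⊢
    rw [Pi.single_eq_of_ne e0.symm, hd0]
    linear_combination this
  · simp only [Pi.add_apply, unitVec_of_ne _ ha, Pi.single_eq_of_ne ha, add_zero, Pi.zero_apply,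
      sub_zero]

theorem phaseSum_sub_same (H : ∀ a, ZMod (p a) →+ ZMod lam) (c : ∀ a, Fin (n a + 1) → ZMod lam)
    (γ t t' : ∀ a, ZMod (p a)) (u : Digits p n) :
    phaseSum H c γ t u - phaseSum H c γ t' u = ∑ a, H a (u a (Fin.last _) * (t a - t' a)) := by
  unfold phaseSum
  rw [← sum_sub_distrib]
  refine sum_congr rfl fun a _ => ?_
  simp only [map_add, mul_sub, map_sub]
  ring

/-- The integer represented by the digit vector `u` with place values `w`. -/
def wval (w : ∀ a, Fin (n a + 1) → ℤ) (u : Digits p n) : ℤ :=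
  ∑ a, ∑ b, w a b * ((u a b).val : ℤ)

theorem wval_shift (w : ∀ a, Fin (n a + 1) → ℤ)
    (u d : Digits p n) (a₀ : ι) (b₀ : Fin (n a₀ + 1))
    (hd : d a₀ b₀ = 0) :
    wval w (u + d + unitVec a₀ b₀) - wval w (u + unitVec a₀ b₀)
    = wval w (u + d) - wval w u := by
  unfold wval
  simp only [← sum_sub_distrib, ← mul_sub, val_shift u d a₀ b₀ hd]

/-- The complementary-code property on digit vectors, the correlation pairs being written as
`(u, u + d)`. For `d ≠ 0` the sum vanishes by translation: in `γ` if some block of `d` starts with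
a nonzero digit, and otherwise in the digit preceding the first nonzero digit of some block of `d`,
which leaves the condition on the shift `τ` intact. -/
theorem abstract_ccc (ψ : AddChar (ZMod lam) ℂ) (H : ∀ a, ZMod (p a) →+ ZMod lam)
    (hψ : ∀ a x, ψ (H a x) = 1 → x = 0)
    (c : ∀ a, Fin (n a + 1) → ZMod lam) (w : ∀ a, Fin (n a + 1) → ℤ) (t t' : ∀ a, ZMod (p a))
    (τ : ℤ) :
    ∑ γ : ∀ a, ZMod (p a), ∑ d : Digits p n, ∑ u,
      (if wval w (u + d) - wval w u = τ then
        ψ (phaseSum H c γ t u - phaseSum H c γ t' (u + d)) else 0)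
    = if τ = 0 ∧ t = t' then (∏ a, (p a : ℂ)) * ∏ a, (p a : ℂ) ^ (n a + 1) else 0 := by
  have hψ' : ∀ a x, x ≠ 0 → ψ (H a x) ≠ 1 := fun a x hx h => hx (hψ a x h)
  rw [sum_comm, sum_eq_single 0]
  -- `d = 0`: a nonzero contribution needs `τ = 0`, and then `t ≠ t'` is detected by the last digit.
  · by_cases hτ : τ = 0
    · subst hτ
      by_cases ht : t = t'
      · subst ht
        simp [Fintype.card_pi, ZMod.card]
      · simp only [add_zero, sub_self, if_true, ht, and_false, if_false]
        refine sum_eq_zero fun γ _ => ?_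
        obtain ⟨a, ha⟩ := Function.ne_iff.mp ht
        refine sum_eq_zero_of_shift _ (unitVec a (Fin.last _))
          (ψ (H a (t a - t' a))) (hψ' _ _ (sub_ne_zero.mpr ha)) fun u => ?_
        rw [phaseSum_sub_same, phaseSum_sub_same, ← AddChar.map_add_eq_mul]
        congr 1
        simp only [Pi.add_apply, add_mul, map_add, sum_add_distrib]
        rw [add_comm, sum_eq_single a]
        · simp [unitVec_same]
        · intro b _ hb
          simp [unitVec_of_ne _ hb]
        · simp
    · simp [hτ, Ne.symm hτ]
  · intro d _ hd
    by_cases h0 : ∃ a, d a 0 ≠ 0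
    · obtain ⟨a, ha⟩ := h0
      rw [sum_comm]
      refine sum_eq_zero fun u _ => ?_
      split_ifs
      · refine sum_eq_zero_of_shift _ (Pi.single a 1) (ψ (H a (-d a 0)))
          (hψ' _ _ (neg_ne_zero.mpr ha)) fun γ => ?_
        rw [phaseSum_add_gamma, phaseSum_add_gamma, ← AddChar.map_add_eq_mul]
        congr 1
        rw [add_sub_add_comm, add_comm, ← sum_sub_distrib]
        congr 1
        rw [sum_eq_single a]
        · simp
        · intro b _ hb
          simp [Pi.single_eq_of_ne hb]
        · simp
      · simp
    · push Not at h0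
      refine sum_eq_zero fun γ _ => ?_
      obtain ⟨a, ha⟩ := Function.ne_iff.mp hd
      -- `b.succ` is the first nonzero position of block `a` of `d`; it is not `0` by `h0`.
      have hex : ∃ b : Fin (n a), d a b.succ ≠ 0 ∧ ∀ i, i ≤ b.castSucc → d a i = 0 := by
        by_contra! hcon
        refine ha (funext fun i => ?_)
        induction i using WellFoundedLT.induction with
        | _ i ih =>
          by_cases hi : i = 0
          · subst hi; exact h0 a
          · obtain ⟨b, rfl⟩ := Fin.exists_succ_eq.mpr hi
            by_contra hb
            obtain ⟨i, hi1, hi2⟩ := hcon b hb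
            exact hi2 (ih i (lt_of_le_of_lt hi1 Fin.castSucc_lt_succ))
      obtain ⟨b, hb, hb0⟩ := hex
      refine sum_eq_zero_of_shift _ (unitVec a b.castSucc)
          (ψ (H a (-d a b.succ))) (hψ' _ _ (neg_ne_zero.mpr hb)) fun u => ?_
      rw [add_right_comm u _ d, wval_shift w u d a _ (hb0 _ le_rfl),
        phaseSum_shift H c γ t t' u d a b hb0, mul_ite, mul_zero, ← AddChar.map_add_eq_mul,
        map_neg, neg_add_eq_sub]
  · simp
end abstract_code

/-! ### Mixed-radix expansions -/

theorem sum_digits (p x n : ℕ) : ∑ b ∈ range n, p ^ b * (x / p ^ b % p) = x % p ^ n := by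
  induction n with
  | zero => simp [Nat.mod_one]
  | succ n ih => rw [sum_range_succ, ih, Nat.mod_pow_succ]

/-- Mixed-radix expansion of `x % ∏ P`, blocks of lower index varying faster. -/
theorem sum_blocks (k : ℕ) (P : Fin k → ℕ) (x : ℕ) :
    ∑ α, (∏ α' ∈ univ.filter (fun α' => α' < α), P α') *
      (x / (∏ α' ∈ univ.filter (fun α' => α' < α), P α') % P α) = x % ∏ α, P α := by
  induction k with
  | zero => simp [Nat.mod_one]
  | succ k ih =>
    rw [Fin.sum_univ_castSucc, Fin.prod_univ_castSucc, Nat.mod_mul, ← ih (fun a => P a.castSucc)]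
    simp only [prod_filter, Fin.prod_univ_castSucc, Fin.castSucc_lt_castSucc_iff,
      Fin.castSucc_lt_last, if_true, lt_self_iff_false, if_false, mul_one,
      (Fin.castSucc_lt_last _).not_gt]

/-! ### Correlations as sums over pairs at a given distance -/

/-- Sum of `f i j` over the pairs of indices in `{0, …, L - 1}` at distance `j - i = τ`. -/
noncomputable def pairSum (L : ℕ) (τ : ℤ) (f : ℕ → ℕ → ℂ) : ℂ :=
  ∑ i ∈ range L, ∑ j ∈ range L, if (j : ℤ) - i = τ then f i j else 0

theorem pairSum_swap (L : ℕ) (τ : ℤ) (f : ℕ → ℕ → ℂ) :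
    pairSum L τ f = pairSum L (-τ) (fun i j => f j i) := by
  unfold pairSum
  rw [sum_comm]
  refine sum_congr rfl fun i _ => sum_congr rfl fun j _ => ?_
  have : (i : ℤ) - j = τ ↔ (j : ℤ) - i = -τ := by omega
  simp only [this]

theorem pairSum_nonneg {L : ℕ} {τ : ℤ} (hτ : 0 ≤ τ) (f : ℕ → ℕ → ℂ) :
    ∑ i ∈ range (L - τ.toNat), f i (i + τ.toNat) = pairSum L τ f := by
  unfold pairSum
  have h : ∀ i ∈ range L, (∑ j ∈ range L, if (j : ℤ) - i = τ then f i j else 0)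
      = if i < L - τ.toNat then f i (i + τ.toNat) else 0 := by
    intro i hi
    split_ifs with h1
    · rw [sum_eq_single (i + τ.toNat)]
      · rw [if_pos (by push_cast; omega)]
      · intro j _ hj
        rw [if_neg (by omega)]
      · intro hj
        exact absurd (mem_range.mpr (by omega)) hj
    · refine sum_eq_zero fun j hj => if_neg ?_
      rw [mem_range] at hi hj
      omega
  rw [sum_congr rfl h, ← sum_filter]
  congr 1
  ext i
  simp only [mem_range, mem_filter]
  omega

theorem pairSum_neg {L : ℕ} {τ : ℤ} (hτ : ¬ 0 ≤ τ) (f : ℕ → ℕ → ℂ) :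
    ∑ i ∈ range (L - (-τ).toNat), f (i + (-τ).toNat) i = pairSum L τ f := by
  rw [pairSum_swap, ← pairSum_nonneg (by omega)]

theorem accf2_eq_pairSum (L1 L2 : ℕ) (X Y : ℕ → ℕ → ℂ) (τ1 τ2 : ℤ) :
    accf2 L1 L2 X Y τ1 τ2 = pairSum L1 τ1 fun i i' => pairSum L2 τ2 fun j j' =>
      X i j * (starRingEnd ℂ) (Y i' j') := by
  unfold accf2
  split_ifs with h1 h2 h2
  · rw [← pairSum_nonneg h1]
    refine sum_congr rfl fun i _ => ?_
    rw [← pairSum_nonneg h2]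
  · rw [← pairSum_nonneg h1]
    refine sum_congr rfl fun i _ => ?_
    rw [← pairSum_neg h2]
  · rw [← pairSum_neg h1]
    refine sum_congr rfl fun i _ => ?_
    rw [← pairSum_nonneg h2]
  · rw [← pairSum_neg h1]
    refine sum_congr rfl fun i _ => ?_
    rw [← pairSum_neg h2]

theorem sum_range_mul_blocks (Q M : ℕ) (f : ℕ → ℂ) :
    ∑ i ∈ range (Q * M), f i = ∑ q ∈ range Q, ∑ r ∈ range M, f (q * M + r) := by
  induction Q with
  | zero => simp
  | succ Q ih => rw [Nat.succ_mul, sum_range_add, ih, sum_range_succ]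

/-- A correlation of sequences of length `Q * M` split into correlations between their length-`M`
blocks. -/
theorem pairSum_blocks (Q M : ℕ) (τ : ℤ) (f : ℕ → ℕ → ℂ) :
    pairSum (Q * M) τ f = ∑ q ∈ range Q, ∑ q' ∈ range Q,
      pairSum M (τ - ((q' : ℤ) - q) * M) fun r r' => f (q * M + r) (q' * M + r') := by
  unfold pairSum
  simp only [sum_range_mul_blocks]
  refine sum_congr rfl fun q _ => ?_
  rw [sum_comm]
  refine sum_congr rfl fun q' _ => sum_congr rfl fun r _ => sum_congr rfl fun r' _ => ?_
  have : ((q' * M + r' : ℕ) : ℤ) - (q * M + r : ℕ) = τ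
      ↔ (r' : ℤ) - r = τ - ((q' : ℤ) - q) * M := by
    push_cast
    constructor <;> intro h <;> linarith
  simp only [this]

theorem pairSum_congr {L : ℕ} {τ : ℤ} {f g : ℕ → ℕ → ℂ}
    (h : ∀ i < L, ∀ j < L, (j : ℤ) - i = τ → f i j = g i j) : pairSum L τ f = pairSum L τ g := by
  unfold pairSum
  refine sum_congr rfl fun i hi => sum_congr rfl fun j hj => ?_
  split_ifs with hτ
  · exact h i (mem_range.mp hi) j (mem_range.mp hj) hτ
  · rfl

theorem pairSum_sum {I : Type*} (S : Finset I) (L : ℕ) (τ : ℤ) (f : I → ℕ → ℕ → ℂ) :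
    ∑ x ∈ S, pairSum L τ (f x) = pairSum L τ fun i j => ∑ x ∈ S, f x i j := by
  unfold pairSum
  rw [sum_comm]
  refine sum_congr rfl fun i _ => ?_
  rw [sum_comm]
  refine sum_congr rfl fun j _ => ?_
  split_ifs <;> simp

theorem pairSum_mul (L : ℕ) (τ : ℤ) (a : ℂ) (f : ℕ → ℕ → ℂ) :
    pairSum L τ (fun i j => a * f i j) = a * pairSum L τ f := by
  unfold pairSum
  simp only [mul_sum, mul_ite, mul_zero]

/-! ### The one-dimensional complementary code -/

/-- The homomorphism `ZMod p → ZMod lam` sending `1` to `lam / p`, for `p ∣ lam`. -/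
def scaleHom (lam p : ℕ) (h : p ∣ lam) : ZMod p →+ ZMod lam :=
  ZMod.lift p ⟨(AddMonoidHom.mulLeft ((lam / p : ℕ) : ZMod lam)).comp (Int.castAddHom (ZMod lam)), by
    simp [← Nat.cast_mul, Nat.div_mul_cancel h]⟩

theorem scaleHom_natCast {lam p : ℕ} (h : p ∣ lam) (x : ℕ) :
    scaleHom lam p h (x : ZMod p) = ((lam / p : ℕ) : ZMod lam) * x := by
  have := ZMod.lift_coe p ⟨(AddMonoidHom.mulLeft ((lam / p : ℕ) : ZMod lam)).comp
    (Int.castAddHom (ZMod lam)), by simp [← Nat.cast_mul, Nat.div_mul_cancel h]⟩ (x : ℤ)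
  unfold scaleHom
  simpa using this

theorem scaleHom_eq_zero {lam p : ℕ} [NeZero p] (h0 : 0 < lam) (h : p ∣ lam) (x : ZMod p)
    (hx : scaleHom lam p h x = 0) : x = 0 := by
  obtain ⟨q, rfl⟩ := h
  have hp : 0 < p := Nat.pos_of_ne_zero (NeZero.ne p)
  have hq : 0 < q := Nat.pos_of_mul_pos_left h0
  rw [← ZMod.natCast_zmod_val x, scaleHom_natCast, ← Nat.cast_mul, ZMod.natCast_eq_zero_iff,
    Nat.mul_div_cancel_left _ hp, mul_comm p q] at hx
  rw [← ZMod.natCast_zmod_val x, ZMod.natCast_eq_zero_iff]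
  exact Nat.dvd_of_mul_dvd_mul_left hq hx

section bridge
variable {k : ℕ} {p m : Fin k → ℕ} {π : Fin k → ℕ → ℕ}

/-- The mixed-radix digits of `j`, those of block `α` listed in the order `π α 0, π α 1, …`. -/
def digits (p m : Fin k → ℕ) (π : Fin k → ℕ → ℕ) (j : ℕ) : Digits p (fun α => m α - 2) :=
  fun α β => (dig p m j α (π α β) : ZMod (p α))

/-- The place value of the digit at position `π α β` of block `α`. -/
def weight (p m : Fin k → ℕ) (π : Fin k → ℕ → ℕ) (α : Fin k) (β : Fin (m α - 2 + 1)) : ℤ :=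
  ((∏ α' ∈ univ.filter (fun α' => α' < α), p α' ^ (m α' - 1) : ℕ) : ℤ) * (p α : ℤ) ^ π α β

theorem digits_val (hp : ∀ α, (p α).Prime) (j : ℕ) (α : Fin k) (β : Fin (m α - 2 + 1)) :
    (digits p m π j α β).val = dig p m j α (π α β) :=
  ZMod.val_natCast_of_lt (Nat.mod_lt _ (hp α).pos)

theorem sum_range_perm {A : Type*} [AddCommMonoid A] {N : ℕ} {s : ℕ → ℕ}
    (hs : Set.BijOn s (Set.Iio N) (Set.Iio N)) (f : ℕ → A) :
    ∑ β ∈ range N, f (s β) = ∑ b ∈ range N, f b :=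
  sum_bij (fun β _ => s β) (fun β h => mem_range.mpr (hs.mapsTo (mem_range.mp h)))
    (fun _ h _ h' e => hs.injOn (mem_range.mp h) (mem_range.mp h') e)
    (fun b h => by
      obtain ⟨a, ha, rfl⟩ := hs.surjOn (show b ∈ Set.Iio N from mem_range.mp h)
      exact ⟨a, mem_range.mpr ha, rfl⟩) (fun _ _ => rfl)

theorem sum_fin_perm {A : Type*} [AddCommMonoid A] {M : ℕ} (hM : 2 ≤ M) {s : ℕ → ℕ}
    (hs : Set.BijOn s (Set.Iio (M - 1)) (Set.Iio (M - 1))) (f : ℕ → A) :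
    ∑ β : Fin (M - 2 + 1), f (s β) = ∑ b ∈ range (M - 1), f b := by
  rw [Fin.sum_univ_eq_sum_range (fun b => f (s b)), show M - 2 + 1 = M - 1 by omega,
    sum_range_perm hs]

theorem wval_digits (hp : ∀ α, (p α).Prime) (hm : ∀ α, 2 ≤ m α)
    (hπ : ∀ α, Set.BijOn (π α) (Set.Iio (m α - 1)) (Set.Iio (m α - 1)))
    {j : ℕ} (hj : j < ∏ α, p α ^ (m α - 1)) : wval (weight p m π) (digits p m π j) = j := by
  conv_rhs => rw [← Nat.mod_eq_of_lt hj, ← sum_blocks, Nat.cast_sum]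
  unfold wval
  refine sum_congr rfl fun α _ => ?_
  simp only [digits_val hp, weight, mul_assoc]
  rw [← mul_sum, sum_fin_perm (hm α) (hπ α) (fun b => (p α : ℤ) ^ b * (dig p m j α b : ℤ)),
    Nat.cast_mul]
  congr 1
  have h := sum_digits (p α)
    ((j / ∏ α' ∈ univ.filter (fun α' => α' < α), p α' ^ (m α' - 1)) % p α ^ (m α - 1)) (m α - 1)
  rw [Nat.mod_mod] at h
  rw [← h, Nat.cast_sum]
  refine sum_congr rfl fun b _ => ?_
  rw [Nat.cast_mul, Nat.cast_pow]
  rfl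

theorem digits_bijective (hp : ∀ α, (p α).Prime) (hm : ∀ α, 2 ≤ m α)
    (hπ : ∀ α, Set.BijOn (π α) (Set.Iio (m α - 1)) (Set.Iio (m α - 1))) :
    Function.Bijective fun j : Fin (∏ α, p α ^ (m α - 1)) => digits p m π j := by
  have : ∀ α, Fact (p α).Prime := fun α => ⟨hp α⟩
  rw [Fintype.bijective_iff_injective_and_card]
  refine ⟨fun i j h => Fin.ext ?_, ?_⟩
  · have := congrArg (wval (weight p m π)) h
    simp only [wval_digits hp hm hπ i.isLt, wval_digits hp hm hπ j.isLt] at this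
    exact_mod_cast this
  · simp only [Fintype.card_fin, Fintype.card_pi, ZMod.card, prod_const, card_univ]
    refine prod_congr rfl fun α _ => ?_
    rw [show m α - 2 + 1 = m α - 1 by have := hm α; omega]

theorem RFun_eq_phaseSum [∀ α, Fact (p α).Prime] (hm : ∀ α, 2 ≤ m α)
    (hp : ∀ α, (p α).Prime)
    (hπ : ∀ α, Set.BijOn (π α) (Set.Iio (m α - 1)) (Set.Iio (m α - 1)))
    {lam : ℕ} (hdvd : ∀ α, p α ∣ lam) (c : Fin k → ℕ → ZMod lam) (c' : Fin k → ZMod lam)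
    (γ t : ∀ α, Fin (p α)) (j : ℕ) :
    RFun p m lam π c c' γ t j = phaseSum (fun α => scaleHom lam (p α) (hdvd α))
      (fun α β => c α (π α β)) (fun α => ((γ α : ℕ) : ZMod (p α)))
      (fun α => ((t α : ℕ) : ZMod (p α))) (digits p m π j) + ∑ α, c' α := by
  unfold RFun fFun phaseSum
  simp only [digits_val hp]
  rw [← sum_add_distrib, ← sum_add_distrib, ← sum_add_distrib]
  refine sum_congr rfl fun α _ => ?_
  rw [sum_fin_perm (hm α) (hπ α) (fun b => c α b * (dig p m j α b : ZMod lam))]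
  simp only [digits, map_add, map_sum, ← Nat.cast_mul, scaleHom_natCast]
  rw [← Fin.sum_univ_eq_sum_range
    (fun β => ((dig p m j α (π α β) * dig p m j α (π α (β + 1)) : ℕ) : ZMod lam)) (m α - 2),
    mul_sum]
  simp only [Fin.val_castSucc, Fin.val_succ, Fin.val_zero, Fin.val_last]
  push_cast
  ring

theorem sum_fin_eq_sum_zmod [∀ α, Fact (p α).Prime] (F : (∀ α, ZMod (p α)) → ℂ) :
    ∑ γ : ∀ α, Fin (p α), F (fun α => ((γ α : ℕ) : ZMod (p α))) = ∑ γ, F γ := by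
  refine Fintype.sum_bijective _ ?_ _ _ fun _ => rfl
  rw [Fintype.bijective_iff_injective_and_card]
  refine ⟨fun γ δ h => funext fun α => Fin.ext ?_, by simp [Fintype.card_pi, ZMod.card]⟩
  have := congrArg ZMod.val (congrFun h α)
  simpa only [ZMod.val_natCast_of_lt (Fin.isLt _)] using this

/-- The sequences `ω ^ R_t^γ`, with `t` indexing the groups and `γ` the sequences of a group, form a
complete complementary code. -/
theorem ccc (hp : ∀ α, (p α).Prime) (hm : ∀ α, 2 ≤ m α)
    (hπ : ∀ α, Set.BijOn (π α) (Set.Iio (m α - 1)) (Set.Iio (m α - 1)))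
    {lam : ℕ} [NeZero lam] (hdvd : ∀ α, p α ∣ lam) (c : Fin k → ℕ → ZMod lam)
    (c' : Fin k → ZMod lam) (t t' : ∀ α, Fin (p α)) (τ : ℤ) :
    ∑ γ : ∀ α, Fin (p α), pairSum (∏ α, p α ^ (m α - 1)) τ (fun i j =>
      ZMod.stdAddChar (RFun p m lam π c c' γ t i - RFun p m lam π c c' γ t' j))
    = if τ = 0 ∧ t = t' then (∏ α, (p α : ℂ)) * ∏ α, (p α : ℂ) ^ (m α - 1) else 0 := by
  have : ∀ α, Fact (p α).Prime := fun α => ⟨hp α⟩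
  have hmain := abstract_ccc (n := fun α => m α - 2) (ZMod.stdAddChar (N := lam))
    (fun α => scaleHom lam (p α) (hdvd α)) (fun α x h => scaleHom_eq_zero (NeZero.pos lam) _ x
      (ZMod.injective_stdAddChar (h.trans (AddChar.map_zero_eq_one _).symm)))
    (fun α β => c α (π α β)) (weight p m π) (fun α => ((t α : ℕ) : ZMod (p α)))
    (fun α => ((t' α : ℕ) : ZMod (p α))) τ
  have ht : (fun α => ((t α : ℕ) : ZMod (p α))) = (fun α => ((t' α : ℕ) : ZMod (p α))) ↔ t = t' := by
    refine ⟨fun h => funext fun α => Fin.ext ?_, fun h => by rw [h]⟩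
    have := congrArg ZMod.val (congrFun h α)
    simpa only [ZMod.val_natCast_of_lt (Fin.isLt _)] using this
  have hn : ∀ α, m α - 2 + 1 = m α - 1 := fun α => by have := hm α; omega
  simp only [ht, hn] at hmain
  rw [← hmain, ← sum_fin_eq_sum_zmod]
  refine sum_congr rfl fun γ _ => ?_
  rw [sum_comm]
  unfold pairSum
  rw [← Fin.sum_univ_eq_sum_range (fun i => ∑ j ∈ range (∏ α, p α ^ (m α - 1)),
    if (j : ℤ) - i = τ then ZMod.stdAddChar (RFun p m lam π c c' γ t i -
      RFun p m lam π c c' γ t' j) else 0)]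
  refine Fintype.sum_bijective _ (digits_bijective hp hm hπ) _ _ fun i => ?_
  rw [← Fin.sum_univ_eq_sum_range (fun j => if (j : ℤ) - i = τ then
    ZMod.stdAddChar (RFun p m lam π c c' γ t i - RFun p m lam π c c' γ t' j) else 0)]
  refine Fintype.sum_bijective (fun j : Fin (∏ α, p α ^ (m α - 1)) => digits p m π j - digits p m π i)
    ((Equiv.subRight (digits p m π (i : ℕ))).bijective.comp (digits_bijective hp hm hπ)) _ _
    fun j => ?_
  simp only [add_sub_cancel, wval_digits hp hm hπ i.isLt, wval_digits hp hm hπ j.isLt,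
    RFun_eq_phaseSum hm hp hπ hdvd, add_sub_add_right_eq_sub]

end bridge

/-! ### The Golay pair along the rows -/

section golay
variable {lam mB : ℕ} {πB : ℕ → ℕ}

/-- Binary digits are the mixed-radix digits of a single block of radix `2`. -/
theorem dig_eq_bit {i : ℕ} (hi : i < 2 ^ mB) (β : ℕ) :
    dig (fun _ : Fin 1 => 2) (fun _ => mB + 1) i 0 β = bit i β := by
  simp [dig, bit, Nat.mod_eq_of_lt hi]

theorem RFun_eq_aBool (g : ℕ → ZMod lam) (e : ZMod lam)
    (γ : Fin 2) {i : ℕ} (hi : i < 2 ^ mB) :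
    RFun (fun _ : Fin 1 => 2) (fun _ => mB + 1) lam (fun _ => πB) (fun _ => g) (fun _ => e)
      (fun _ => γ) (fun _ => 0) i
    = aBool lam mB πB g e i + ((lam / 2 : ℕ) : ZMod lam) * (bit i (πB 0) : ZMod lam) * (γ : ℕ) := by
  unfold RFun fFun aBool
  simp [dig_eq_bit hi]

/-- The sequences `ω ^ a` and `ω ^ b` form a Golay pair: this is the complementary code with a
single prime `2`, the trivial group index, and `γ` selecting the member of the pair. -/
theorem golay [NeZero lam] (heven : 2 ∣ lam) (hmB : 1 ≤ mB)
    (hπB : Set.BijOn πB (Set.Iio mB) (Set.Iio mB)) (g : ℕ → ZMod lam) (e e' : ZMod lam) (τ : ℤ) :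
    pairSum (2 ^ mB) τ (fun i i' =>
      ZMod.stdAddChar (aBool lam mB πB g e i - aBool lam mB πB g e i')
      + ZMod.stdAddChar (bBool lam mB πB g e' i - bBool lam mB πB g e' i'))
    = if τ = 0 then 2 ^ (mB + 1) else 0 := by
  have h := ccc (k := 1) (p := fun _ => 2) (m := fun _ => mB + 1) (π := fun _ => πB)
    (fun _ => Nat.prime_two) (fun _ => by omega) (fun _ => by simpa using hπB)
    (lam := lam) (fun _ => heven) (fun _ => g) (fun _ => e) (fun _ => 0) (fun _ => 0) τ
  have h2 : ∀ F : (Fin 1 → Fin 2) → ℂ, ∑ γ, F γ = F (fun _ => 0) + F (fun _ => 1) := fun F => by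
    rw [← (Equiv.funUnique (Fin 1) (Fin 2)).symm.sum_comp F, Fin.sum_univ_two]
    rfl
  rw [pairSum_sum] at h
  simp only [h2, univ_unique, prod_const, card_singleton, pow_one, Nat.add_sub_cancel, and_true,
    Nat.cast_ofNat] at h
  rw [pow_succ', ← h]
  refine pairSum_congr fun i hi j hj _ => ?_
  -- `b` differs from the `γ = 1` member only by the constant `e' - e`, which cancels.
  have hb : ∀ i, bBool lam mB πB g e' i = bBool lam mB πB g e i + (e' - e) := fun i => by
    unfold bBool aBool; ring
  rw [RFun_eq_aBool _ _ _ hi, RFun_eq_aBool _ _ _ hi, RFun_eq_aBool _ _ _ hj,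
    RFun_eq_aBool _ _ _ hj, hb, hb, add_sub_add_right_eq_sub]
  simp [bBool]

end golay

/-! ### Assembling the two-dimensional arrays -/

section assembly
variable {k : ℕ} {p m : Fin k → ℕ}

/-- The part of the phase of the array entry in row `i` and column block `q` that does not depend
on the position inside the block nor on `γ`. -/
def blockPhase (p : Fin k → ℕ) (lam mB : ℕ) (πB : ℕ → ℕ) (g : ℕ → ZMod lam) (e e' : ZMod lam)
    (s1 s2 : ∀ α, Fin (p α)) (i q : ℕ) : ZMod lam :=
  (∑ α, ((lam / p α : ℕ) : ZMod lam) * (odig p (q % ∏ α, p α) α : ZMod lam) *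
      (((if q / ∏ α, p α = 0 then s1 else s2) α : ℕ) : ZMod lam))
    + if q / ∏ α, p α = 0 then aBool lam mB πB g e i else bBool lam mB πB g e' i

theorem prod_split (hm : ∀ α, 2 ≤ m α) :
    ∏ α, p α ^ m α = (∏ α, p α ^ (m α - 1)) * ∏ α, p α := by
  rw [← prod_mul_distrib]
  refine prod_congr rfl fun α _ => ?_
  rw [← pow_succ, Nat.sub_add_cancel (by have := hm α; omega)]

/-- On column block `q` every entry is a complementary-code phase with group index `t1` (first half
of the blocks) or `t2` (second half), plus a phase constant along the block. -/
theorem FFun_block (hm : ∀ α, 2 ≤ m α) (lam : ℕ) (π : Fin k → ℕ → ℕ)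
    (c : Fin k → ℕ → ZMod lam) (c' : Fin k → ZMod lam)
    (mB : ℕ) (πB : ℕ → ℕ) (g : ℕ → ZMod lam) (e e' : ZMod lam)
    (s1 s2 t1 t2 γ : ∀ α, Fin (p α)) (i : ℕ) {q r : ℕ} (hq : q < 2 * ∏ α, p α)
    (hr : r < ∏ α, p α ^ (m α - 1)) :
    FFun p m lam π c c' mB πB g e e' s1 s2 t1 t2 γ i (q * (∏ α, p α ^ (m α - 1)) + r)
    = RFun p m lam π c c' γ (if q / ∏ α, p α = 0 then t1 else t2) r
      + blockPhase p lam mB πB g e e' s1 s2 i q := by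
  unfold FFun aFun blockPhase
  rw [prod_split hm]
  set M := ∏ α, p α ^ (m α - 1) with hM
  set P := ∏ α, p α with hP
  have h1 : (q * M + r) / (M * P) = q / P := by
    rw [← Nat.div_div_eq_div_mul, mul_comm q, Nat.mul_add_div (by omega), Nat.div_eq_of_lt hr,
      add_zero]
  have h2 : (q * M + r) % (M * P) % M = r := by
    rw [Nat.mod_mul_right_mod, mul_comm q, Nat.mul_add_mod, Nat.mod_eq_of_lt hr]
  have h3 : (q * M + r) % (M * P) / M = q % P := by
    rw [Nat.mod_mul_right_div_self, mul_comm q, Nat.mul_add_div (by omega), Nat.div_eq_of_lt hr,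
      add_zero]
  rw [h1, h2, h3]
  have h4 : q / P < 2 := Nat.div_lt_of_lt_mul (by rwa [mul_comm])
  obtain h5 | h5 := Nat.le_one_iff_eq_zero_or_eq_one.mp (Nat.lt_succ_iff.mp h4)
  · simp only [h5, if_true, Nat.cast_zero]
    ring
  · simp only [h5, one_ne_zero, if_false, Nat.cast_one]
    ring

theorem XArr_mul_conj (lam : ℕ) [NeZero lam] (π : Fin k → ℕ → ℕ)
    (c : Fin k → ℕ → ZMod lam) (c' : Fin k → ZMod lam)
    (mB : ℕ) (πB : ℕ → ℕ) (g : ℕ → ZMod lam) (e e' : ZMod lam)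
    (s1 s2 t1 t2 s1' s2' t1' t2' γ : ∀ α, Fin (p α)) (i j i' j' : ℕ) :
    XArr p m lam π c c' mB πB g e e' s1 s2 t1 t2 γ i j *
      (starRingEnd ℂ) (XArr p m lam π c c' mB πB g e e' s1' s2' t1' t2' γ i' j')
    = ZMod.stdAddChar (FFun p m lam π c c' mB πB g e e' s1 s2 t1 t2 γ i j -
        FFun p m lam π c c' mB πB g e e' s1' s2' t1' t2' γ i' j') := by
  have h : ∀ s1 s2 t1 t2 : ∀ α, Fin (p α), ∀ i j,
      XArr p m lam π c c' mB πB g e e' s1 s2 t1 t2 γ i j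
      = ZMod.stdAddChar (FFun p m lam π c c' mB πB g e e' s1 s2 t1 t2 γ i j) := fun _ _ _ _ _ _ => by
    rw [ZMod.stdAddChar_apply, ZMod.toCircle_apply]
    rfl
  rw [h, h, ← AddChar.map_neg_eq_conj, ← AddChar.map_add_eq_mul, sub_eq_add_neg]

/-- Aggregate correlation of two array families as a sum over pairs of column blocks: by the
complementary code property only pairs with equal group index and exactly aligned blocks
survive. -/
theorem sum_accf2 (hp : ∀ α, (p α).Prime) (hm : ∀ α, 2 ≤ m α)
    (lam : ℕ) [NeZero lam] (hdvd : ∀ α, p α ∣ lam) (π : Fin k → ℕ → ℕ)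
    (hπ : ∀ α, Set.BijOn (π α) (Set.Iio (m α - 1)) (Set.Iio (m α - 1)))
    (c : Fin k → ℕ → ZMod lam) (c' : Fin k → ZMod lam)
    (mB : ℕ) (πB : ℕ → ℕ) (g : ℕ → ZMod lam) (e e' : ZMod lam)
    (s1 s2 t1 t2 s1' s2' t1' t2' : ∀ α, Fin (p α)) (τ1 τ2 : ℤ) :
    ∑ γ : ∀ α, Fin (p α), accf2 (2 ^ mB) (2 * ∏ α, p α ^ (m α))
        (XArr p m lam π c c' mB πB g e e' s1 s2 t1 t2 γ)
        (XArr p m lam π c c' mB πB g e e' s1' s2' t1' t2' γ) τ1 τ2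
    = pairSum (2 ^ mB) τ1 fun i i' => ∑ q ∈ range (2 * ∏ α, p α), ∑ q' ∈ range (2 * ∏ α, p α),
        ZMod.stdAddChar (blockPhase p lam mB πB g e e' s1 s2 i q
          - blockPhase p lam mB πB g e e' s1' s2' i' q') *
        if τ2 - ((q' : ℤ) - q) * (∏ α, p α ^ (m α - 1) : ℕ) = 0 ∧
            (if q / ∏ α, p α = 0 then t1 else t2) = (if q' / ∏ α, p α = 0 then t1' else t2')
        then (∏ α, (p α : ℂ)) * ∏ α, (p α : ℂ) ^ (m α - 1) else 0 := by
  simp only [accf2_eq_pairSum, XArr_mul_conj]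
  rw [pairSum_sum]
  refine pairSum_congr fun i _ i' _ _ => ?_
  rw [show 2 * ∏ α, p α ^ m α = (2 * ∏ α, p α) * ∏ α, p α ^ (m α - 1) by rw [prod_split hm]; ring]
  simp only [pairSum_blocks]
  rw [sum_comm]
  refine sum_congr rfl fun q hq => ?_
  rw [sum_comm]
  refine sum_congr rfl fun q' hq' => ?_
  rw [← ccc hp hm hπ hdvd c c', mul_sum]
  refine sum_congr rfl fun γ _ => ?_
  rw [← pairSum_mul]
  refine pairSum_congr fun r hr r' hr' _ => ?_
  rw [FFun_block hm _ _ _ _ _ _ _ _ _ _ _ _ _ _ _ (mem_range.mp hq) hr,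
    FFun_block hm _ _ _ _ _ _ _ _ _ _ _ _ _ _ _ (mem_range.mp hq') hr',
    ← AddChar.map_add_eq_mul]
  congr 1
  ring

/-- A shift shorter than the block length aligns two blocks only if it is zero and the blocks
coincide. -/
theorem block_aligned {M : ℕ} {τ : ℤ} (hτ : |τ| < (M : ℤ)) {q q' : ℕ}
    (h : τ - ((q' : ℤ) - q) * M = 0) : τ = 0 ∧ q = q' := by
  have h1 : (M : ℤ) ∣ τ := ⟨(q' : ℤ) - q, by linarith⟩
  have h2 : τ = 0 := Int.eq_zero_of_abs_lt_dvd h1 hτ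
  have h3 : (M : ℤ) ≠ 0 := by
    have := abs_nonneg τ
    omega
  rw [h2, zero_sub, neg_eq_zero, mul_eq_zero] at h
  have := h.resolve_right h3
  exact ⟨h2, by omega⟩

theorem sum_two_blocks (P : ℕ) (F : ℕ → ℂ) (x y : ℂ) (h0 : ∀ q < P, F q = x)
    (h1 : ∀ q < P, F (P + q) = y) : ∑ q ∈ range (2 * P), F q = P * (x + y) := by
  rw [two_mul, sum_range_add, sum_congr rfl fun q hq => h0 q (mem_range.mp hq),
    sum_congr rfl fun q hq => h1 q (mem_range.mp hq)]
  simp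
  ring

/-- Each family of arrays is by itself a ZCAC. -/
theorem sum_accf2_self (hp : ∀ α, (p α).Prime) (hm : ∀ α, 2 ≤ m α)
    (lam : ℕ) [NeZero lam] (heven : 2 ∣ lam) (hdvd : ∀ α, p α ∣ lam) (π : Fin k → ℕ → ℕ)
    (hπ : ∀ α, Set.BijOn (π α) (Set.Iio (m α - 1)) (Set.Iio (m α - 1)))
    (c : Fin k → ℕ → ZMod lam) (c' : Fin k → ZMod lam)
    (mB : ℕ) (hmB : 1 ≤ mB) (πB : ℕ → ℕ) (hπB : Set.BijOn πB (Set.Iio mB) (Set.Iio mB))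
    (g : ℕ → ZMod lam) (e e' : ZMod lam)
    (s1 s2 t1 t2 : ∀ α, Fin (p α)) (τ1 τ2 : ℤ)
    (hτ : |τ2| < ((∏ α, p α ^ (m α - 1) : ℕ) : ℤ)) :
    ∑ γ : ∀ α, Fin (p α), accf2 (2 ^ mB) (2 * ∏ α, p α ^ (m α))
        (XArr p m lam π c c' mB πB g e e' s1 s2 t1 t2 γ)
        (XArr p m lam π c c' mB πB g e e' s1 s2 t1 t2 γ) τ1 τ2
    = if τ1 = 0 ∧ τ2 = 0 then ((2 ^ (mB + 1) : ℕ) : ℂ) * ∏ α, (p α : ℂ) ^ (m α + 1) else 0 := by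
  rw [sum_accf2 hp hm lam hdvd π hπ]
  by_cases hτ2 : τ2 = 0
  · subst hτ2
    have hP : 0 < ∏ α, p α := prod_pos fun α _ => (hp α).pos
    trans pairSum (2 ^ mB) τ1 fun i i' =>
      ((∏ α, (p α : ℂ)) * ((∏ α, (p α : ℂ)) * ∏ α, (p α : ℂ) ^ (m α - 1))) *
      (ZMod.stdAddChar (aBool lam mB πB g e i - aBool lam mB πB g e i')
      + ZMod.stdAddChar (bBool lam mB πB g e' i - bBool lam mB πB g e' i'))
    · refine pairSum_congr fun i _ i' _ _ => ?_
      -- Only the diagonal `q = q'` survives, where the `s`-dependent phases cancel; the first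
      -- half of the blocks carries `a`, the second half `b`.
      have hdiag : ∀ q ∈ range (2 * ∏ α, p α), (∑ q' ∈ range (2 * ∏ α, p α),
          ZMod.stdAddChar (blockPhase p lam mB πB g e e' s1 s2 i q
            - blockPhase p lam mB πB g e e' s1 s2 i' q') *
          if 0 - ((q' : ℤ) - q) * (∏ α, p α ^ (m α - 1) : ℕ) = 0 ∧
            (if q / ∏ α, p α = 0 then t1 else t2) = (if q' / ∏ α, p α = 0 then t1 else t2)
          then (∏ α, (p α : ℂ)) * ∏ α, (p α : ℂ) ^ (m α - 1) else 0)
          = ZMod.stdAddChar (blockPhase p lam mB πB g e e' s1 s2 i q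
            - blockPhase p lam mB πB g e e' s1 s2 i' q) *
            ((∏ α, (p α : ℂ)) * ∏ α, (p α : ℂ) ^ (m α - 1)) := by
        intro q hq
        rw [sum_eq_single_of_mem q hq]
        · simp
        · intro q' _ hne
          rw [if_neg (fun h => hne (block_aligned hτ h.1).2.symm), mul_zero]
      rw [sum_congr rfl hdiag, ← sum_mul,
        sum_two_blocks (∏ α, p α) _
          (ZMod.stdAddChar (aBool lam mB πB g e i - aBool lam mB πB g e i'))
          (ZMod.stdAddChar (bBool lam mB πB g e' i - bBool lam mB πB g e' i'))]
      · push_cast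
        ring
      · intro q hq
        simp only [blockPhase, Nat.div_eq_of_lt hq, if_true, add_sub_add_left_eq_sub]
      · intro q hq
        have h1 : (∏ α, p α + q) / ∏ α, p α = 1 := by
          rw [Nat.add_div_left _ hP, Nat.div_eq_of_lt hq]
        simp only [blockPhase, h1, one_ne_zero, if_false, add_sub_add_left_eq_sub]
    · rw [pairSum_mul, golay heven hmB hπB]
      simp only [and_true, mul_ite, mul_zero]
      congr 1
      rw [← prod_mul_distrib, ← prod_mul_distrib, mul_comm]
      push_cast
      congr 1
      refine prod_congr rfl fun α _ => ?_
      rw [← pow_succ', ← pow_succ']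
      congr 1
      have := hm α
      omega
  · rw [if_neg (fun h => hτ2 h.2)]
    have : ∀ q q' : ℕ, ¬ (τ2 - ((q' : ℤ) - q) * (∏ α, p α ^ (m α - 1) : ℕ) = 0) :=
      fun q q' h => hτ2 (block_aligned hτ h).1
    simp [pairSum, this, -Nat.cast_prod]

end assembly

/-- Theorem 3: for two quadruples `ζ1 = (s1¹,s2¹,t1¹,t2¹)` and
`ζ2 = (s1²,s2²,t1²,t2²)` whose four group indices `t1¹,t2¹,t1²,t2²` are pairwise
distinct, the corresponding 2-D ZCACs have zero aggregate cross-correlation in the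
zone `|τ1| < 2^{mB}`, `|τ2| < ∏_α p_α^{m_α-1}`, while each family individually is a
2-D ZCAC with peak value `2^{mB+1}·∏_α p_α^{m_α+1}` at `(0,0)`. -/
theorem zcacs_2d (k : ℕ) (p m : Fin k → ℕ) (hp : ∀ α, (p α).Prime) (hm : ∀ α, 2 ≤ m α)
    (lam : ℕ) (hlam : 0 < lam) (heven : 2 ∣ lam) (hdvd : ∀ α, p α ∣ lam)
    (π : Fin k → ℕ → ℕ)
    (hπ : ∀ α, Set.BijOn (π α) (Set.Iio (m α - 1)) (Set.Iio (m α - 1)))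
    (c : Fin k → ℕ → ZMod lam) (c' : Fin k → ZMod lam)
    (mB : ℕ) (hmB : 1 ≤ mB) (πB : ℕ → ℕ)
    (hπB : Set.BijOn πB (Set.Iio mB) (Set.Iio mB))
    (g : ℕ → ZMod lam) (e e' : ZMod lam)
    (s11 s21 t11 t21 s12 s22 t12 t22 : ∀ α, Fin (p α))
    (hdist : List.Pairwise (· ≠ ·) [t11, t21, t12, t22]) :
    (∀ τ1 τ2 : ℤ, |τ1| < ((2 ^ mB : ℕ) : ℤ) →
        |τ2| < ((∏ α, p α ^ (m α - 1) : ℕ) : ℤ) →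
      ∑ γ : ∀ α, Fin (p α),
          accf2 (2 ^ mB) (2 * ∏ α, p α ^ (m α))
            (XArr p m lam π c c' mB πB g e e' s11 s21 t11 t21 γ)
            (XArr p m lam π c c' mB πB g e e' s12 s22 t12 t22 γ) τ1 τ2 = 0) ∧
    (∀ (s1 s2 t1 t2 : ∀ α, Fin (p α)),
      ((s1, s2, t1, t2) = (s11, s21, t11, t21) ∨ (s1, s2, t1, t2) = (s12, s22, t12, t22)) →
      ∀ τ1 τ2 : ℤ, |τ1| < ((2 ^ mB : ℕ) : ℤ) →
        |τ2| < ((∏ α, p α ^ (m α - 1) : ℕ) : ℤ) →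
        ∑ γ : ∀ α, Fin (p α),
            accf2 (2 ^ mB) (2 * ∏ α, p α ^ (m α))
              (XArr p m lam π c c' mB πB g e e' s1 s2 t1 t2 γ)
              (XArr p m lam π c c' mB πB g e e' s1 s2 t1 t2 γ) τ1 τ2
          = if τ1 = 0 ∧ τ2 = 0 then ((2 ^ (mB + 1) : ℕ) : ℂ) * ∏ α, (p α : ℂ) ^ (m α + 1)
            else 0) := by
  have : NeZero lam := ⟨hlam.ne'⟩
  refine ⟨fun τ1 τ2 _ _ => ?_, fun s1 s2 t1 t2 _ τ1 τ2 _ h2 => ?_⟩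
  · rw [sum_accf2 hp hm lam hdvd π hπ]
    have hne : ∀ q q' : ℕ, ¬ ((if q / ∏ α, p α = 0 then t11 else t21)
        = (if q' / ∏ α, p α = 0 then t12 else t22)) := by
      intro q q'
      simp only [List.pairwise_cons, List.mem_cons, List.not_mem_nil, or_false, forall_eq_or_imp,
        forall_eq] at hdist
      obtain ⟨⟨_, h13, h14⟩, ⟨h23, h24⟩, _⟩ := hdist
      split_ifs <;> assumption
    simp only [pairSum, hne, and_false, if_false, mul_zero, sum_const_zero, ite_self]
  · exact sum_accf2_self hp hm lam heven hdvd π hπ c c' mB hmB πB hπB g e e' s1 s2 t1 t2 τ1 τ2 h2
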